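/- arXiv:1710.02329 — 2 statements merged into one kernel-verified Lean document; each statement's English description precedes it below -/
import Mathlib

section
/- Fix an infinite data domain $D$. A register automaton (RA) is a tuple $(L,R,\Sigma,T)$ with finite sets $L$ of locations, $R$ of registers and $\Sigma$ of letters, and $T\subseteq L\times\Sigma\times\Phi(R)\times 2^R\times L$, where $\Phi(R)$ is the set of constraints built from $\mathsf{true}$ and atoms $(=r)$, $r\in R$, by conjunction and negation. A configuration is a pair $(\ell,\nu)\in L\times D^R$. On input $(a,d)\in\Sigma\times D$ a transition $(\ell,a,\varphi,\mathsf{up},\ell')\in T$ may be fired from $(\ell,\nu)$ if $(\nu,d)$ satisfies $\varphi$, where $(\nu,d)$ satisfies $(=r)$ iff $\nu(r)=d$; the successor is $(\ell',\nu[\mathsf{up}:=d])$. Let $\mathrm{post}(q,(a,d))$ be the set of successors of $q$, extended to sets of configurations by union and to data words (finite words over $\Sigma\times D$) by iteration. The RA is deterministic if always $|\mathrm{post}(q,(a,d))|\le 1$. A data word $w$ is synchronizing if $\mathrm{post}(L\times D^R,w)$ is a singleton. Given an initial location $\ell_i$ and an accepting location $\ell_f$, the language is the set of data words $w$ over which there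 is a run from $(\ell_i,\nu)$ to $(\ell_f,\nu')$ for some valuations $\nu,\nu'$. Let $\mathcal A=(L,R,\Sigma,T)$ be a deterministic register automaton with $k$ registers, with a designated initial location $\ell_i$ all of whose outgoing transitions update all registers, and such that the first step does not depend on the initial register contents, i.e. $\mathrm{post}((\ell_i,\nu),(a,d))=\mathrm{post}((\ell_i,\nu'),(a,d))$ for all valuations $\nu,\nu'$ and all inputs $(a,d)$ (for instance, all transitions leaving $\ell_i$ have guard $\mathsf{true}$). Let $\ell_f$ be a designated accepting location with no outgoing transitions, and suppose that every configuration whose location is not $\ell_f$ has exactly one successor on every input. Let $\mathcal A_{\mathsf{syn}}$ be the register automaton with locations $L\cup\{\mathsf{reset}\}$ ($\mathsf{reset}\notin L$), alphabet $\Sigma\cup\{\star\}$ ($\star\notin\Sigma$), the same registers, and transition relation obtained from $T$ by adding the following transitions, each with guard $\mathsf{true}$ and updating all registers: from $\ell_f$ to $\ell_f$ on every $a\in\Sigma\cup\{\star\}$; from $\ell_i$ to $\ell_i$ on $\star$; from $\mathsf{reset}$ to $\ell_i$ on every $a\in\Sigma\cup\{\star\}$; and from $\ell$ to $\mathsf{reset}$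 on $\star$ for every $\ell\in L\setminus\{\ell_i,\ell_f\}$. Then $\mathcal A_{\mathsf{syn}}$ is deterministic, and the language of $\mathcal A$ is nonempty if and only if $\mathcal A_{\mathsf{syn}}$ has a synchronizing data word. -/
/-- Register constraints over a set `R` of registers: built from the atom `true` and
atoms `= r` for `r ∈ R` using conjunction and negation. -/
inductive RC (R : Type*)
  | tt : RC R
  | req : R → RC R
  | conj : RC R → RC R → RC R
  | neg : RC R → RC R

/-- Satisfaction of a register constraint by a register valuation `ν` and a datum `d`. -/
def RC.sat {R D : Type*} (ν : R → D) (d : D) : RC R → Prop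
  | RC.tt => True
  | RC.req r => ν r = d
  | RC.conj φ ψ => RC.sat ν d φ ∧ RC.sat ν d ψ
  | RC.neg φ => ¬ RC.sat ν d φ

/-- A configuration: a location together with a register valuation. -/
abbrev Config (L R D : Type*) := L × (R → D)

/-- A transition: source location, letter, guard, update set, target location. -/
abbrev RATrans (L A R : Type*) := L × A × RC R × Set R × L

open Classical in
/-- The update `ν[up := d]` of a register valuation. -/
noncomputable def updVal {R D : Type*} (ν : R → D) (up : Set R) (d : D) : R → D :=
  fun r => if r ∈ up then d else ν r

/-- `post(q, (a, d))`: the set of successors of the configuration `q` on the input `(a, d)`, in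
the register automaton with transition relation `T`. -/
def post {L A R D : Type*} (T : Set (RATrans L A R)) (q : Config L R D) (i : A × D) :
    Set (Config L R D) :=
  {q' | ∃ (φ : RC R) (up : Set R) (ℓ' : L),
    (q.1, i.1, φ, up, ℓ') ∈ T ∧ RC.sat q.2 i.2 φ ∧ q' = (ℓ', updVal q.2 up i.2)}

/-- `post` of a set of configurations on a data word. -/
def postWord {L A R D : Type*} (T : Set (RATrans L A R)) (S : Set (Config L R D)) :
    List (A × D) → Set (Config L R D)
  | [] => S
  | i :: w => postWord T (⋃ q ∈ S, post T q i) w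

/-- `RARun T q w q'`: there is a run over the data word `w` from `q` to `q'`. -/
inductive RARun {L A R D : Type*} (T : Set (RATrans L A R)) :
    Config L R D → List (A × D) → Config L R D → Prop
  | nil (q : Config L R D) : RARun T q [] q
  | cons {q q' q'' : Config L R D} {i : A × D} {w : List (A × D)} :
      q' ∈ post T q i → RARun T q' w q'' → RARun T q (i :: w) q''

/-- The language of the register automaton with initial location `ℓi` and accepting
location `ℓf`; the initial register valuation is arbitrary. -/
def raLanguage (D : Type*) {L A R : Type*} (T : Set (RATrans L A R)) (ℓi ℓf : L) :
    Set (List (A × D)) :=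
  {w | ∃ ν ν' : R → D, RARun T (ℓi, ν) w (ℓf, ν')}

/-- Determinism: every configuration has at most one successor on every input. -/
def RADet (D : Type*) {L A R : Type*} (T : Set (RATrans L A R)) : Prop :=
  ∀ (q : Config L R D) (i : A × D), (post T q i).Subsingleton

/-- A synchronizing data word: it sends the set of all configurations to a single
configuration. -/
def IsSync (D : Type*) {L A R : Type*} (T : Set (RATrans L A R)) (w : List (A × D)) : Prop :=
  ∃ q : Config L R D, postWord T (Set.univ : Set (Config L R D)) w = {q}

/-- The transition relation of `A_syn`. Locations are `L ⊕ Unit`, where `Sum.inr ()` is `reset`;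
the alphabet is `A ⊕ Unit`, where `Sum.inr ()` is `★`. -/
def synT {L A R : Type*} (T : Set (RATrans L A R)) (ℓi ℓf : L) :
    Set (RATrans (L ⊕ Unit) (A ⊕ Unit) R) :=
  {t | (∃ ℓ a φ up ℓ', (ℓ, a, φ, up, ℓ') ∈ T ∧
          t = (Sum.inl ℓ, Sum.inl a, φ, up, Sum.inl ℓ'))
    ∨ (∃ b : A ⊕ Unit, t = (Sum.inl ℓf, b, RC.tt, Set.univ, Sum.inl ℓf))
    ∨ t = (Sum.inl ℓi, Sum.inr (), RC.tt, Set.univ, Sum.inl ℓi)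
    ∨ (∃ b : A ⊕ Unit, t = (Sum.inr (), b, RC.tt, Set.univ, Sum.inl ℓi))
    ∨ (∃ ℓ : L, ℓ ≠ ℓi ∧ ℓ ≠ ℓf ∧
          t = (Sum.inl ℓ, Sum.inr (), RC.tt, Set.univ, Sum.inr ()))}

/-!
From every configuration of `A_syn` the word `★★` leads to `ℓi` or to the trap `ℓf`. If `A` accepts
`w`, then `★★w★` therefore takes every configuration to `ℓf`, and its last letter overwrites all
registers with one datum. Conversely, no configuration leaves the trap `ℓf`, so a synchronizing word
must also take `reset` to `ℓf`. From `reset`, the added transitions lead to the locations of `A`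
only through `ℓi`; from the last such entry on, the run follows transitions of `A` until it reaches
`ℓf`, and `A` may start with any register contents.
-/

section RegisterAutomaton

variable {L A R D : Type*} {T : Set (RATrans L A R)}

/-- Totality: every configuration has at least one successor on every input. -/
def RATotal (D : Type*) {L A R : Type*} (T : Set (RATrans L A R)) : Prop :=
  ∀ (q : Config L R D) (i : A × D), (post T q i).Nonempty

/-- The configurations reachable from the location `ℓ₀`; as in `raLanguage`, the initial register
valuation is arbitrary. -/
def raReachable (D : Type*) {L A R : Type*} (T : Set (RATrans L A R)) (ℓ₀ : L) :
    Set (Config L R D) :=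
  {q | ∃ (ν : R → D) (w : List (A × D)), RARun T (ℓ₀, ν) w q}

theorem updVal_univ (ν : R → D) (d : D) : updVal ν Set.univ d = fun _ => d := by
  funext r
  simp [updVal]

theorem post_eq_singleton_of_forall_mem_iff {ℓ ℓ' : L} {a : A}
    (h : ∀ φ up m, (ℓ, a, φ, up, m) ∈ T ↔ φ = RC.tt ∧ up = Set.univ ∧ m = ℓ')
    (ν : R → D) (d : D) : post T (ℓ, ν) (a, d) = {(ℓ', fun _ => d)} := by
  ext q
  simp [post, h, RC.sat, updVal_univ]

namespace RARun

theorem single {q q' : Config L R D} {i : A × D} (h : q' ∈ post T q i) : RARun T q [i] q' :=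
  .cons h (.nil q')

theorem append {q q' q'' : Config L R D} {v w : List (A × D)} (h : RARun T q v q')
    (h' : RARun T q' w q'') : RARun T q (v ++ w) q'' := by
  induction h with
  | nil => exact h'
  | cons hp _ ih => exact .cons hp (ih h')

theorem map {L' A' R' D' : Type*} {T' : Set (RATrans L' A' R')}
    {f : Config L R D → Config L' R' D'} {g : A × D → A' × D'}
    (hfg : ∀ q i, Set.MapsTo f (post T q i) (post T' (f q) (g i)))
    {q q' : Config L R D} {w : List (A × D)} (h : RARun T q w q') :
    RARun T' (f q) (w.map g) (f q') := by
  induction h with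
  | nil => exact .nil _
  | cons hp _ ih => exact .cons (hfg _ _ hp) ih

theorem mem_of_forall_post_subset {S : Set (Config L R D)} (hS : ∀ q ∈ S, ∀ i, post T q i ⊆ S)
    {q q' : Config L R D} {w : List (A × D)} (h : RARun T q w q') (hq : q ∈ S) : q' ∈ S := by
  induction h with
  | nil => exact hq
  | cons hp _ ih => exact ih (hS _ hq _ hp)

end RARun

theorem RADet.eq_of_run (hT : RADet D T) {q q₁ q₂ : Config L R D} {w : List (A × D)}
    (h₁ : RARun T q w q₁) (h₂ : RARun T q w q₂) : q₁ = q₂ := by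
  induction h₁ with
  | nil => cases h₂; rfl
  | cons hp _ ih =>
    cases h₂ with
    | cons hp' h => exact ih (hT _ _ hp hp' ▸ h)

theorem RATotal.exists_run (hT : RATotal D T) (q : Config L R D) (w : List (A × D)) :
    ∃ q', RARun T q w q' := by
  induction w generalizing q with
  | nil => exact ⟨q, .nil q⟩
  | cons i w ih =>
    obtain ⟨p, hp⟩ := hT q i
    obtain ⟨q', h⟩ := ih p
    exact ⟨q', .cons hp h⟩

theorem mem_postWord {S : Set (Config L R D)} {w : List (A × D)} {q' : Config L R D} :
    q' ∈ postWord T S w ↔ ∃ q ∈ S, RARun T q w q' := by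
  induction w generalizing S with
  | nil =>
    refine ⟨fun h => ⟨q', h, .nil q'⟩, ?_⟩
    rintro ⟨q, hq, ⟨⟩⟩
    exact hq
  | cons i w ih =>
    simp only [postWord, ih, Set.mem_iUnion]
    constructor
    · rintro ⟨p, ⟨q, hq, hp⟩, h⟩
      exact ⟨q, hq, .cons hp h⟩
    · rintro ⟨q, hq, _ | ⟨hp, h⟩⟩
      exact ⟨_, ⟨q, hq, hp⟩, h⟩

theorem RADet.isSync (hT : RADet D T) {w : List (A × D)} {q' : Config L R D}
    (h : ∀ q, RARun T q w q') : IsSync D T w := by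
  refine ⟨q', Set.eq_singleton_iff_unique_mem.2 ⟨mem_postWord.2 ⟨q', trivial, h q'⟩, ?_⟩⟩
  intro p hp
  obtain ⟨q, -, hq⟩ := mem_postWord.1 hp
  exact hT.eq_of_run hq (h q)

theorem IsSync.exists_forall_run (hT : RATotal D T) {w : List (A × D)} (hw : IsSync D T w) :
    ∃ q', ∀ q : Config L R D, RARun T q w q' := by
  obtain ⟨q', hq'⟩ := hw
  refine ⟨q', fun q => ?_⟩
  obtain ⟨p, hp⟩ := hT.exists_run q w
  have hpq' : p ∈ ({q'} : Set (Config L R D)) := hq' ▸ mem_postWord.2 ⟨q, trivial, hp⟩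
  exact hpq' ▸ hp

theorem mk_mem_raReachable (ℓ₀ : L) (ν : R → D) : (ℓ₀, ν) ∈ raReachable D T ℓ₀ :=
  ⟨ν, [], .nil _⟩

theorem post_subset_raReachable {ℓ₀ : L} {q : Config L R D} (hq : q ∈ raReachable D T ℓ₀)
    (i : A × D) : post T q i ⊆ raReachable D T ℓ₀ := by
  obtain ⟨ν, w, h⟩ := hq
  exact fun q' hq' => ⟨ν, w ++ [i], h.append (.single hq')⟩

theorem raLanguage_nonempty_iff {ℓi ℓf : L} :
    (raLanguage D T ℓi ℓf).Nonempty ↔ ∃ ν, (ℓf, ν) ∈ raReachable D T ℓi :=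
  ⟨fun ⟨w, ν, ν', h⟩ => ⟨ν', ν, w, h⟩, fun ⟨ν', ν, w, h⟩ => ⟨w, ν, ν', h⟩⟩

theorem exists_run_of_mem_raLanguage {ℓi ℓf : L}
    (hindep : ∀ (i : A × D) (ν ν' : R → D), post T (ℓi, ν) i = post T (ℓi, ν') i)
    {w : List (A × D)} (hw : w ∈ raLanguage D T ℓi ℓf) (ν : R → D) :
    ∃ ν', RARun T (ℓi, ν) w (ℓf, ν') := by
  obtain ⟨ν₀, ν', _ | ⟨hp, h⟩⟩ := hw
  · exact ⟨ν, .nil _⟩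
  · exact ⟨ν', .cons (hindep _ _ ν ▸ hp) h⟩

end RegisterAutomaton

section SynAutomaton

variable {L A R D : Type*} {T : Set (RATrans L A R)} {ℓi ℓf : L}

theorem post_synT_reset (ν : R → D) (b : A ⊕ Unit) (d : D) :
    post (synT T ℓi ℓf) (Sum.inr (), ν) (b, d) = {(Sum.inl ℓi, fun _ => d)} :=
  post_eq_singleton_of_forall_mem_iff (by simp only [synT, Set.mem_ofPred_eq]; grind) ν d

theorem post_synT_final (hfin : ∀ a φ up ℓ', (ℓf, a, φ, up, ℓ') ∉ T) (ν : R → D) (b : A ⊕ Unit)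
    (d : D) : post (synT T ℓi ℓf) (Sum.inl ℓf, ν) (b, d) = {(Sum.inl ℓf, fun _ => d)} :=
  post_eq_singleton_of_forall_mem_iff (by simp only [synT, Set.mem_ofPred_eq]; grind) ν d

theorem post_synT_init_star (ν : R → D) (d : D) :
    post (synT T ℓi ℓf) (Sum.inl ℓi, ν) (Sum.inr (), d) = {(Sum.inl ℓi, fun _ => d)} :=
  post_eq_singleton_of_forall_mem_iff (by simp only [synT, Set.mem_ofPred_eq]; grind) ν d

theorem post_synT_star {ℓ : L} (hi : ℓ ≠ ℓi) (hf : ℓ ≠ ℓf) (ν : R → D) (d : D) :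
    post (synT T ℓi ℓf) (Sum.inl ℓ, ν) (Sum.inr (), d) = {(Sum.inr (), fun _ => d)} :=
  post_eq_singleton_of_forall_mem_iff (by simp [synT, hi, hf]) ν d

theorem mapsTo_post_synT (q : Config L R D) (i : A × D) :
    Set.MapsTo (Prod.map Sum.inl id) (post T q i)
      (post (synT T ℓi ℓf) (Prod.map Sum.inl id q) (Prod.map Sum.inl id i)) := by
  rintro _ ⟨φ, up, ℓ', hT, hsat, rfl⟩
  exact ⟨φ, up, _, .inl ⟨_, _, _, _, _, hT, rfl⟩, hsat, rfl⟩

theorem post_synT_letter {ℓ : L} (hf : ℓ ≠ ℓf) (ν : R → D) (a : A) (d : D) :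
    post (synT T ℓi ℓf) (Sum.inl ℓ, ν) (Sum.inl a, d) =
      Prod.map Sum.inl id '' post T (ℓ, ν) (a, d) := by
  refine Set.Subset.antisymm ?_ (mapsTo_post_synT (ℓ, ν) (a, d)).image_subset
  rintro _ ⟨φ, up, m, h, hsat, rfl⟩
  obtain ⟨ℓ', hT, rfl⟩ : ∃ ℓ', (ℓ, a, φ, up, ℓ') ∈ T ∧ Sum.inl ℓ' = m := by
    simpa [synT, hf, eq_comm (b := m)] using h
  exact ⟨_, ⟨φ, up, ℓ', hT, hsat, rfl⟩, rfl⟩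

theorem post_synT_eq_singleton_or_image (hfin : ∀ a φ up ℓ', (ℓf, a, φ, up, ℓ') ∉ T)
    (q : Config (L ⊕ Unit) R D) (i : (A ⊕ Unit) × D) :
    (∃ q', post (synT T ℓi ℓf) q i = {q'}) ∨
      ∃ (p : Config L R D) (j : A × D), p.1 ≠ ℓf ∧
        post (synT T ℓi ℓf) q i = Prod.map Sum.inl id '' post T p j := by
  obtain ⟨ℓ | _, ν⟩ := q
  · obtain rfl | hf := eq_or_ne ℓ ℓf
    · exact .inl ⟨_, post_synT_final hfin ν i.1 i.2⟩
    obtain ⟨a | _, d⟩ := i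
    · exact .inr ⟨(ℓ, ν), (a, d), hf, post_synT_letter hf ν a d⟩
    obtain rfl | hi := eq_or_ne ℓ ℓi
    · exact .inl ⟨_, post_synT_init_star ν d⟩
    · exact .inl ⟨_, post_synT_star hi hf ν d⟩
  · exact .inl ⟨_, post_synT_reset ν i.1 i.2⟩

theorem raDet_synT (hdet : RADet D T) (hfin : ∀ a φ up ℓ', (ℓf, a, φ, up, ℓ') ∉ T) :
    RADet D (synT T ℓi ℓf) := by
  intro q i
  obtain ⟨q', h⟩ | ⟨p, j, -, h⟩ := post_synT_eq_singleton_or_image (ℓi := ℓi) hfin q i <;> rw [h]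
  · exact Set.subsingleton_singleton
  · exact (hdet p j).image _

theorem raTotal_synT (hfin : ∀ a φ up ℓ', (ℓf, a, φ, up, ℓ') ∉ T)
    (hcomp : ∀ (q : Config L R D) (i : A × D), q.1 ≠ ℓf → (post T q i).Nonempty) :
    RATotal D (synT T ℓi ℓf) := by
  intro q i
  obtain ⟨q', h⟩ | ⟨p, j, hp, h⟩ := post_synT_eq_singleton_or_image (ℓi := ℓi) hfin q i <;> rw [h]
  · exact Set.singleton_nonempty q'
  · exact (hcomp p j hp).image _

theorem RARun.fst_eq_of_synT_final (hfin : ∀ a φ up ℓ', (ℓf, a, φ, up, ℓ') ∉ T) {ν : R → D}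
    {w : List ((A ⊕ Unit) × D)} {q : Config (L ⊕ Unit) R D}
    (h : RARun (synT T ℓi ℓf) (Sum.inl ℓf, ν) w q) : q.1 = Sum.inl ℓf := by
  refine h.mem_of_forall_post_subset (S := {q | q.1 = Sum.inl ℓf}) ?_ rfl
  rintro ⟨_, ν⟩ rfl ⟨b, d⟩
  rw [post_synT_final hfin, Set.singleton_subset_iff]
  rfl

theorem exists_run_synT_final (hfin : ∀ a φ up ℓ', (ℓf, a, φ, up, ℓ') ∉ T) (ν : R → D)
    (w : List ((A ⊕ Unit) × D)) :
    ∃ ν', RARun (synT T ℓi ℓf) (Sum.inl ℓf, ν) w (Sum.inl ℓf, ν') := by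
  induction w generalizing ν with
  | nil => exact ⟨ν, .nil _⟩
  | cons i w ih =>
    obtain ⟨ν', h⟩ := ih fun _ => i.2
    exact ⟨ν', .cons ((post_synT_final hfin ν i.1 i.2).ge rfl) h⟩

theorem exists_run_synT_star_star (hfin : ∀ a φ up ℓ', (ℓf, a, φ, up, ℓ') ∉ T) (d : D)
    (q : Config (L ⊕ Unit) R D) :
    ∃ ℓ, (ℓ = ℓi ∨ ℓ = ℓf) ∧ RARun (synT T ℓi ℓf) q
      [(Sum.inr (), d), (Sum.inr (), d)] (Sum.inl ℓ, fun _ => d) := by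
  obtain ⟨ℓ | _, ν⟩ := q
  · obtain rfl | hf := eq_or_ne ℓ ℓf
    · exact ⟨ℓ, .inr rfl, .cons ((post_synT_final hfin _ _ d).ge rfl)
        (.single ((post_synT_final hfin _ _ d).ge rfl))⟩
    obtain rfl | hi := eq_or_ne ℓ ℓi
    · exact ⟨ℓ, .inl rfl, .cons ((post_synT_init_star _ d).ge rfl)
        (.single ((post_synT_init_star _ d).ge rfl))⟩
    · exact ⟨ℓi, .inl rfl, .cons ((post_synT_star hi hf _ d).ge rfl)
        (.single ((post_synT_reset _ _ d).ge rfl))⟩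
  · exact ⟨ℓi, .inl rfl, .cons ((post_synT_reset _ _ d).ge rfl)
      (.single ((post_synT_init_star _ d).ge rfl))⟩

theorem exists_isSync_synT [Nonempty D] (hdet : RADet D T)
    (hindep : ∀ (i : A × D) (ν ν' : R → D), post T (ℓi, ν) i = post T (ℓi, ν') i)
    (hfin : ∀ a φ up ℓ', (ℓf, a, φ, up, ℓ') ∉ T) (hne : (raLanguage D T ℓi ℓf).Nonempty) :
    ∃ w : List ((A ⊕ Unit) × D), IsSync D (synT T ℓi ℓf) w := by
  obtain ⟨w, hw⟩ := hne
  obtain ⟨d⟩ := ‹Nonempty D›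
  let star : (A ⊕ Unit) × D := (Sum.inr (), d)
  refine ⟨[star, star] ++ w.map (Prod.map Sum.inl id) ++ [star],
    (raDet_synT hdet hfin).isSync (q' := (Sum.inl ℓf, fun _ => d)) fun q => ?_⟩
  obtain ⟨ℓ, hℓ, hstars⟩ := exists_run_synT_star_star (T := T) (ℓi := ℓi) hfin d q
  obtain ⟨ν, hword⟩ : ∃ ν, RARun (synT T ℓi ℓf) (Sum.inl ℓ, fun _ => d)
      (w.map (Prod.map Sum.inl id)) (Sum.inl ℓf, ν) := by
    rcases hℓ with rfl | rfl
    · obtain ⟨ν, h⟩ := exists_run_of_mem_raLanguage hindep hw fun _ => d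
      exact ⟨ν, h.map mapsTo_post_synT⟩
    · exact exists_run_synT_final hfin _ _
  exact (hstars.append hword).append (.single ((post_synT_final hfin ν _ d).ge rfl))

/-- The configurations of `A_syn` that are located at `reset` or come from a configuration of `A`
reachable from `ℓ₀`. For `ℓ₀ = ℓi` this set is closed under successors in `A_syn` as long as `A`
accepts no word. -/
def resetOrReachable (D : Type*) {L A R : Type*} (T : Set (RATrans L A R)) (ℓ₀ : L) :
    Set (Config (L ⊕ Unit) R D) :=
  {q | q.1 = Sum.inr ()} ∪ Prod.map Sum.inl id '' raReachable D T ℓ₀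

theorem post_synT_subset_resetOrReachable (hempty : ¬ (raLanguage D T ℓi ℓf).Nonempty)
    {q : Config (L ⊕ Unit) R D} (hq : q ∈ resetOrReachable D T ℓi) (i : (A ⊕ Unit) × D) :
    post (synT T ℓi ℓf) q i ⊆ resetOrReachable D T ℓi := by
  have hinit (d : D) : {(Sum.inl ℓi, fun _ => d)} ⊆ resetOrReachable D T ℓi :=
    Set.singleton_subset_iff.2 (.inr ⟨_, mk_mem_raReachable ℓi fun _ => d, rfl⟩)
  obtain ⟨_, ν⟩ := q
  obtain ⟨⟨⟩⟩ | ⟨⟨ℓ, ν⟩, hℓ, ⟨⟩⟩ := hq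
  · exact (post_synT_reset ν i.1 i.2).trans_subset (hinit i.2)
  have hf : ℓ ≠ ℓf := by
    rintro rfl
    exact hempty (raLanguage_nonempty_iff.2 ⟨ν, hℓ⟩)
  obtain ⟨a | _, d⟩ := i
  · exact (post_synT_letter hf ν a d).trans_subset
      ((Set.image_mono (post_subset_raReachable hℓ _)).trans Set.subset_union_right)
  obtain rfl | hi := eq_or_ne ℓ ℓi
  · exact (post_synT_init_star ν d).trans_subset (hinit d)
  · exact (post_synT_star hi hf ν d).trans_subset (Set.singleton_subset_iff.2 (.inl rfl))

theorem RARun.mem_raReachable_of_synT_reset (hempty : ¬ (raLanguage D T ℓi ℓf).Nonempty)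
    {ν ν' : R → D} {ℓ : L} {w : List ((A ⊕ Unit) × D)}
    (h : RARun (synT T ℓi ℓf) (Sum.inr (), ν) w (Sum.inl ℓ, ν')) :
    (ℓ, ν') ∈ raReachable D T ℓi := by
  have hmem : (Sum.inl ℓ, ν') ∈ resetOrReachable D T ℓi :=
    h.mem_of_forall_post_subset (fun _ => post_synT_subset_resetOrReachable hempty) (.inl rfl)
  obtain ⟨⟨⟩⟩ | ⟨_, hp, ⟨⟩⟩ := hmem
  exact hp

theorem raLanguage_nonempty_of_isSync (hfin : ∀ a φ up ℓ', (ℓf, a, φ, up, ℓ') ∉ T)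
    (hcomp : ∀ (q : Config L R D) (i : A × D), q.1 ≠ ℓf → (post T q i).Nonempty)
    {w : List ((A ⊕ Unit) × D)} (hw : IsSync D (synT T ℓi ℓf) w) :
    (raLanguage D T ℓi ℓf).Nonempty := by
  by_contra hempty
  obtain ⟨⟨m, ν⟩, hrun⟩ := hw.exists_forall_run (raTotal_synT hfin hcomp)
  obtain rfl : m = Sum.inl ℓf := (hrun (Sum.inl ℓf, ν)).fst_eq_of_synT_final hfin
  have hreach := (hrun (Sum.inr (), ν)).mem_raReachable_of_synT_reset hempty
  exact hempty (raLanguage_nonempty_iff.2 ⟨ν, hreach⟩)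

end SynAutomaton

theorem stmt9_general {L A R D : Type*} [Nonempty D] (T : Set (RATrans L A R)) (ℓi ℓf : L)
    (hdet : RADet D T)
    (hindep : ∀ (i : A × D) (ν ν' : R → D), post T (ℓi, ν) i = post T (ℓi, ν') i)
    (hfin : ∀ a φ up ℓ', (ℓf, a, φ, up, ℓ') ∉ T)
    (hcomp : ∀ (q : Config L R D) (i : A × D), q.1 ≠ ℓf → (post T q i).Nonempty) :
    RADet D (synT T ℓi ℓf) ∧
    ((raLanguage D T ℓi ℓf).Nonempty ↔
      ∃ w : List ((A ⊕ Unit) × D), IsSync D (synT T ℓi ℓf) w) :=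
  ⟨raDet_synT hdet hfin, exists_isSync_synT hdet hindep hfin,
    fun ⟨_, hw⟩ => raLanguage_nonempty_of_isSync hfin hcomp hw⟩

theorem stmt9 {L A R D : Type*} [Finite L] [Finite A] [Finite R] [Infinite D]
    (T : Set (RATrans L A R)) (ℓi ℓf : L)
    (hdet : RADet D T)
    -- all transitions leaving `ℓi` update all registers
    (hinit : ∀ a φ up ℓ', (ℓi, a, φ, up, ℓ') ∈ T → up = Set.univ)
    -- the first step does not depend on the initial register contents
    (hindep : ∀ (i : A × D) (ν ν' : R → D), post T (ℓi, ν) i = post T (ℓi, ν') i)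
    -- `ℓf` has no outgoing transitions
    (hfin : ∀ a φ up ℓ', (ℓf, a, φ, up, ℓ') ∉ T)
    -- completeness outside `ℓf`
    (hcomp : ∀ (q : Config L R D) (i : A × D), q.1 ≠ ℓf → ∃! q', q' ∈ post T q i) :
    RADet D (synT T ℓi ℓf) ∧
    ((raLanguage D T ℓi ℓf).Nonempty ↔
      ∃ w : List ((A ⊕ Unit) × D), IsSync D (synT T ℓi ℓf) w) :=
  stmt9_general T ℓi ℓf hdet hindep hfin fun q i hq => (hcomp q i hq).exists
end

section
/- Fix an infinite data domain $D$. A register automaton is a tuple $A=(L,R,\Sigma,T)$ with finite sets $L$ of locations, $R$ of registers and $\Sigma$ of letters, and a set $T$ of transitions $\ell\xrightarrow{a,\varphi,up}\ell'$ with $\ell,\ell'\in L$, $a\in\Sigma$, $up\subseteq R$, and $\varphi$ a guard built from $\mathrm{true}$ and atoms $(=r)$, $r\in R$, by conjunction and negation; $(\nu,d)\in D^R\times D$ satisfies $(=r)$ iff $\nu(r)=d$. A configuration is a pair $(\ell,\nu)\in L\times D^R$. On input $(a,d)\in\Sigma\times D$ the above transition may be fired from $(\ell,\nu)$ if $(\nu,d)$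 satisfies $\varphi$, and leads to $(\ell',\nu[up:=d])$, i.e. the registers in $up$ are set to $d$ and the others are unchanged; $\mathrm{post}((\ell,\nu),(a,d))$ is the set of all configurations so obtained, and $\mathrm{post}$ is extended to sets of configurations by union and to data words (finite words over $\Sigma\times D$) by iteration. $A$ is complete if $\mathrm{post}(q,(a,d))\neq\emptyset$ for all configurations $q$ and inputs $(a,d)$. Given $\ell_{is}\in L$ and $L_{acc}\subseteq L$, the language of $A$ is the set of data words $w$ such that, for some $\nu,\nu'\in D^R$ and some $\ell'\in L_{acc}$, there is a run over $w$ from $(\ell_{is},\nu)$ to $(\ell',\nu')$. A nonempty data word $w$ is synchronizing if $\mathrm{post}(L\times D^R,w)$ is a singleton. Let $A=(L,R,\Sigma,T)$ be a complete (in general nondeterministic) register automaton with a designated initial location $\ell_{is}$ and a designated set $L_{acc}\subseteq L$ of accepting locations. Assume that all transitions leaving $\ell_{is}$ update all registers, and that their firing does not depend on the initial register contents: for every input $(a,d)\in\Sigma\times D$, the set of target locations of the transitions that may be fired from $(\ell_{is},\nu)$ on $(a,d)$ is the same for all $\nu\in D^R$ (for instance, all these transitions have the guard $\mathrm{true}$).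 Let $A_{syn}$ be the register automaton with locations $L\cup\{\mathsf{reset},\mathsf{synch}\}$ ($\mathsf{reset},\mathsf{synch}\notin L$ distinct), registers $R$, alphabet $\Sigma\cup\{\#,\star\}$ ($\#,\star\notin\Sigma$ distinct), and transition relation obtained from $T$ by adding the following transitions, all with guard $\mathrm{true}$ and updating all registers: $\mathsf{synch}\xrightarrow{a}\mathsf{synch}$ for every $a\in\Sigma\cup\{\#,\star\}$; $\mathsf{reset}\xrightarrow{\star}\ell_{is}$, and $\mathsf{reset}\xrightarrow{a}\mathsf{reset}$ for every $a\in\Sigma\cup\{\#\}$; $\ell\xrightarrow{\star}\ell_{is}$ for every $\ell\in L$; $\ell\xrightarrow{\#}\mathsf{synch}$ for every $\ell\in L\setminus L_{acc}$; and $\ell\xrightarrow{\#}\mathsf{reset}$ for every $\ell\in L_{acc}$. Then there exists a data word over $\Sigma\times D$ not in the language of $A$ if and only if $A_{syn}$ has a synchronizing data word. -/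
namespace RegAut

universe u v w x

/-- Register constraints over a set `R` of registers: built from the atom `true` and
atoms `= r` for `r ∈ R` using conjunction and negation. -/
inductive Guard (R : Type u) : Type u
  | tt : Guard R
  | eqReg : R → Guard R
  | conj : Guard R → Guard R → Guard R
  | neg : Guard R → Guard R

/-- Satisfaction of a register constraint by a register valuation `ν` and a datum `d`. -/
def Guard.Sat {R : Type u} {D : Type v} (ν : R → D) (d : D) : Guard R → Prop
  | .tt => True
  | .eqReg r => ν r = d
  | .conj φ ψ => Guard.Sat ν d φ ∧ Guard.Sat ν d ψ
  | .neg φ => ¬ Guard.Sat ν d φ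

/-- A transition `src --(letter, guard, upd)--> tgt`, where `upd` is the set of updated registers. -/
@[ext]
structure Trans (L : Type u) (R : Type v) (A : Type w) where
  src : L
  letter : A
  guard : Guard R
  upd : Set R
  tgt : L

/-- A register automaton with locations `L`, registers `R` and alphabet `A`, given by its
transition relation. -/
structure RA (L : Type u) (R : Type v) (A : Type w) where
  trans : Set (Trans L R A)

/-- A configuration: a location together with a register valuation. -/
abbrev Config (L : Type u) (R : Type v) (D : Type x) := L × (R → D)

/-- A data word over the alphabet `A` and the data domain `D`. -/
abbrev DataWord (A : Type w) (D : Type x) := List (A × D)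

open Classical in
/-- The updated valuation `ν[up := d]`. -/
noncomputable def update {R : Type v} {D : Type x} (ν : R → D) (up : Set R) (d : D) : R → D :=
  fun r => if r ∈ up then d else ν r

namespace RA

variable {L : Type u} {R : Type v} {A : Type w} {D : Type x}

/-- The transition `t` may be fired from the configuration `q` on the input `i`. -/
def Enabled (M : RA L R A) (q : Config L R D) (i : A × D) (t : Trans L R A) : Prop :=
  t ∈ M.trans ∧ t.src = q.1 ∧ t.letter = i.1 ∧ t.guard.Sat q.2 i.2

/-- The set of successors of a configuration on an input. -/
def post (M : RA L R A) (q : Config L R D) (i : A × D) : Set (Config L R D) :=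
  {q' | ∃ t, M.Enabled q i t ∧ q' = (t.tgt, update q.2 t.upd i.2)}

/-- `post` extended to sets of configurations by union and to data words by iteration. -/
def postWord (M : RA L R A) : Set (Config L R D) → DataWord A D → Set (Config L R D)
  | S, [] => S
  | S, i :: w => M.postWord (⋃ q ∈ S, M.post q i) w

/-- `M.Run q w q'`: there is a run of `M` over the data word `w` from `q` to `q'`. -/
inductive Run (M : RA L R A) : Config L R D → DataWord A D → Config L R D → Prop
  | nil (q : Config L R D) : Run M q [] q
  | cons {q q₁ q' : Config L R D} {i : A × D} {w : DataWord A D} :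
      q₁ ∈ M.post q i → Run M q₁ w q' → Run M q (i :: w) q'

/-- Completeness (over the data domain `D`): every configuration has at least one successor on
every input. -/
def Complete (M : RA L R A) (D : Type x) : Prop :=
  ∀ (q : Config L R D) (i : A × D), (M.post q i).Nonempty

/-- The language of `M` with initial location `ini` and set `acc` of accepting locations; the
initial register valuation is arbitrary. -/
def language (M : RA L R A) (D : Type x) (ini : L) (acc : Set L) : Set (DataWord A D) :=
  {w | ∃ (ν ν' : R → D) (ℓ' : L), ℓ' ∈ acc ∧ M.Run (ini, ν) w (ℓ', ν')}

/-- A (nonempty) data word is synchronizing if it takes the set of all configurations to a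
single configuration. -/
def IsSynchronizing (M : RA L R A) (w : DataWord A D) : Prop :=
  w ≠ [] ∧ ∃ q : Config L R D, M.postWord Set.univ w = {q}

/-- All transitions leaving `ini` update all registers. -/
def UpdatesAllFrom (M : RA L R A) (ini : L) : Prop :=
  ∀ t ∈ M.trans, t.src = ini → t.upd = Set.univ

/-- On every input, the set of locations reached by the transitions that may be fired in the
location `ini` does not depend on the register valuation. This is the case, for instance, if all
transitions leaving `ini` have the guard `true`. -/
def ValuationIndependentFrom (M : RA L R A) (D : Type x) (ini : L) : Prop :=
  ∀ (ν ν' : R → D) (i : A × D),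
    {ℓ' | ∃ t, M.Enabled (ini, ν) i t ∧ t.tgt = ℓ'} =
      {ℓ' | ∃ t, M.Enabled (ini, ν') i t ∧ t.tgt = ℓ'}

end RA

/-- The locations `L ∪ {reset, synch}`. -/
inductive SynLoc (L : Type u) : Type u
  | loc : L → SynLoc L
  | reset : SynLoc L
  | synch : SynLoc L

/-- The alphabet `Σ ∪ {#, ★}`. -/
inductive SynLetter (A : Type w) : Type w
  | letter : A → SynLetter A
  | hash : SynLetter A
  | star : SynLetter A

/-- The transition `ℓ --(a, true, update all registers)--> ℓ'`. -/
def freeTrans {L : Type u} (R : Type v) {A : Type w} (ℓ : L) (a : A) (ℓ' : L) : Trans L R A :=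
  ⟨ℓ, a, Guard.tt, Set.univ, ℓ'⟩

/-- A transition of the given automaton, seen as a transition over `L ∪ {reset, synch}` and
`Σ ∪ {#, ★}`. -/
def Trans.embed {L : Type u} {R : Type v} {A : Type w} (t : Trans L R A) :
    Trans (SynLoc L) R (SynLetter A) :=
  ⟨.loc t.src, .letter t.letter, t.guard, t.upd, .loc t.tgt⟩

/-- The automaton `A_syn`. -/
def RA.syn {L : Type u} {R : Type v} {A : Type w} (M : RA L R A) (ini : L) (acc : Set L) :
    RA (SynLoc L) R (SynLetter A) where
  trans :=
    Trans.embed '' M.trans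
    ∪ {t | ∃ a : SynLetter A, t = freeTrans R .synch a .synch}
    ∪ {freeTrans R .reset .star (.loc ini)}
    ∪ {t | ∃ a : SynLetter A, a ≠ .star ∧ t = freeTrans R .reset a .reset}
    ∪ {t | ∃ ℓ : L, t = freeTrans R (.loc ℓ) .star (.loc ini)}
    ∪ {t | ∃ ℓ : L, ℓ ∉ acc ∧ t = freeTrans R (.loc ℓ) .hash .synch}
    ∪ {t | ∃ ℓ : L, ℓ ∈ acc ∧ t = freeTrans R (.loc ℓ) .hash .reset}

end RegAut

/-!
Since `A_syn` never leaves `synch`, it can only synchronize there. If `M` rejects `w`, then `★ w #`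
is synchronizing: `★` takes all configurations outside `synch` to `ini` with all registers equal,
and from there `w` leads only to non-accepting locations, which `#` sends to `synch`. Conversely,
if `M` is universal, then a run of `A_syn` from `reset` can always avoid `synch`: on the letters
read since the last `★` it may follow any run of `M`, so by choosing an accepting one it is sent
back to `reset` when `#` arrives.
-/

namespace RegAut

variable {L R A D : Type*}

theorem update_univ (ν : R → D) (d : D) : update ν Set.univ d = fun _ => d := by
  funext r
  simp [update]

namespace RA

variable {M : RA L R A}

theorem run_nil {q q' : Config L R D} : M.Run q [] q' ↔ q = q' :=
  ⟨fun h => by cases h; rfl, fun h => h ▸ .nil q⟩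

theorem run_cons {q q' : Config L R D} {i : A × D} {w : DataWord A D} :
    M.Run q (i :: w) q' ↔ ∃ q₁ ∈ M.post q i, M.Run q₁ w q' :=
  ⟨fun h => by cases h with | cons hpost hrun => exact ⟨_, hpost, hrun⟩,
    fun ⟨_, hpost, hrun⟩ => .cons hpost hrun⟩

theorem run_concat {q q' : Config L R D} {w : DataWord A D} {i : A × D} :
    M.Run q (w ++ [i]) q' ↔ ∃ q₁, M.Run q w q₁ ∧ q' ∈ M.post q₁ i := by
  induction w generalizing q with
  | nil => simp [run_cons, run_nil]
  | cons j w ih =>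
    simp only [List.cons_append, run_cons, ih]
    grind

theorem mem_postWord {S : Set (Config L R D)} {w : DataWord A D} {q' : Config L R D} :
    q' ∈ M.postWord S w ↔ ∃ q ∈ S, M.Run q w q' := by
  induction w generalizing S with
  | nil => simp [postWord, run_nil]
  | cons i w ih =>
    simp only [postWord, ih, run_cons, Set.mem_iUnion]
    grind

/-- The data words accepted from a fixed configuration `q`, as opposed to `RA.language`, where the
initial register valuation is existentially quantified. -/
def acceptedFrom (M : RA L R A) (q : Config L R D) (acc : Set L) : Set (DataWord A D) :=
  {w | ∃ q', q'.1 ∈ acc ∧ M.Run q w q'}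

theorem mem_language {ini : L} {acc : Set L} {w : DataWord A D} :
    w ∈ M.language D ini acc ↔ ∃ ν, w ∈ M.acceptedFrom (ini, ν) acc := by
  simp [language, acceptedFrom, Prod.exists, exists_comm (α := R → D) (β := L)]

theorem UpdatesAllFrom.post_eq_image {ini : L} (hupdate : M.UpdatesAllFrom ini) (ν : R → D)
    (i : A × D) :
    M.post (ini, ν) i =
      (fun ℓ' => (ℓ', fun _ => i.2)) '' {ℓ' | ∃ t, M.Enabled (ini, ν) i t ∧ t.tgt = ℓ'} := by
  have hupd {t} (ht : M.Enabled (ini, ν) i t) : update ν t.upd i.2 = fun _ => i.2 := by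
    rw [hupdate t ht.1 ht.2.1, update_univ]
  ext q
  constructor
  · rintro ⟨t, ht, rfl⟩
    exact ⟨t.tgt, ⟨t, ht, rfl⟩, by rw [hupd ht]⟩
  · rintro ⟨_, ⟨t, ht, rfl⟩, rfl⟩
    exact ⟨t, ht, by rw [hupd ht]⟩

theorem ValuationIndependentFrom.acceptedFrom_eq {ini : L}
    (hguard : M.ValuationIndependentFrom D ini) (hupdate : M.UpdatesAllFrom ini) (acc : Set L)
    (ν ν' : R → D) : M.acceptedFrom (ini, ν) acc = M.acceptedFrom (ini, ν') acc := by
  have hpost (i : A × D) : M.post (ini, ν) i = M.post (ini, ν') i := by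
    rw [hupdate.post_eq_image, hupdate.post_eq_image, hguard ν ν']
  ext w
  cases w with
  | nil => simp [acceptedFrom, run_nil]
  | cons i w => simp only [acceptedFrom, Set.mem_ofPred_eq, run_cons, hpost]

theorem post_eq_singleton_of_freeTrans {ℓ ℓ' : L} {a : A}
    (h : ∀ t, t ∈ M.trans ∧ t.src = ℓ ∧ t.letter = a ↔ t = freeTrans R ℓ a ℓ') (ν : R → D) (d : D) :
    M.post (ℓ, ν) (a, d) = {(ℓ', fun _ => d)} := by
  have henabled (t : Trans L R A) : M.Enabled (ℓ, ν) (a, d) t ↔ t = freeTrans R ℓ a ℓ' := by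
    rw [← h t]
    refine ⟨fun ⟨ht, hsrc, hlet, _⟩ => ⟨ht, hsrc, hlet⟩, fun ht => ⟨ht.1, ht.2.1, ht.2.2, ?_⟩⟩
    rw [(h t).1 ht]
    trivial
  ext q
  simp [post, henabled, freeTrans, update_univ]

end RA

/-- A configuration of an automaton with locations `L`, seen as a configuration of `A_syn`. -/
def Config.embed (q : Config L R D) : Config (SynLoc L) R D :=
  (.loc q.1, q.2)

/-- A data word over `Σ`, seen as a data word over `Σ ∪ {#, ★}`. -/
def DataWord.embed (w : DataWord A D) : DataWord (SynLetter A) D :=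
  w.map fun i => (.letter i.1, i.2)

namespace RA

variable {M : RA L R A} {ini : L} {acc : Set L}

theorem mem_trans_syn {t : Trans (SynLoc L) R (SynLetter A)} :
    t ∈ (M.syn ini acc).trans ↔
      (∃ s ∈ M.trans, s.embed = t) ∨
      (∃ a, t = freeTrans R .synch a .synch) ∨
      t = freeTrans R .reset .star (.loc ini) ∨
      (∃ a, a ≠ .star ∧ t = freeTrans R .reset a .reset) ∨
      (∃ ℓ, t = freeTrans R (.loc ℓ) .star (.loc ini)) ∨
      (∃ ℓ, ℓ ∉ acc ∧ t = freeTrans R (.loc ℓ) .hash .synch) ∨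
      (∃ ℓ, ℓ ∈ acc ∧ t = freeTrans R (.loc ℓ) .hash .reset) := by
  simp only [syn, Set.mem_union, Set.mem_image, Set.mem_ofPred_eq, Set.mem_singleton_iff, or_assoc]

theorem post_syn_synch (ν : R → D) (i : SynLetter A × D) :
    (M.syn ini acc).post (.synch, ν) i = {(.synch, fun _ => i.2)} :=
  post_eq_singleton_of_freeTrans (fun t => by grind [mem_trans_syn, freeTrans, Trans.embed]) ν i.2

theorem post_syn_reset_star (ν : R → D) (d : D) :
    (M.syn ini acc).post (.reset, ν) (.star, d) = {(.loc ini, fun _ => d)} :=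
  post_eq_singleton_of_freeTrans (fun t => by grind [mem_trans_syn, freeTrans, Trans.embed]) ν d

theorem post_syn_reset_of_ne_star {a : SynLetter A} (ha : a ≠ .star) (ν : R → D) (d : D) :
    (M.syn ini acc).post (.reset, ν) (a, d) = {(.reset, fun _ => d)} :=
  post_eq_singleton_of_freeTrans (fun t => by grind [mem_trans_syn, freeTrans, Trans.embed]) ν d

theorem post_syn_embed_star (q : Config L R D) (d : D) :
    (M.syn ini acc).post q.embed (.star, d) = {(.loc ini, fun _ => d)} :=
  post_eq_singleton_of_freeTrans (fun t => by grind [mem_trans_syn, freeTrans, Trans.embed]) q.2 d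

theorem post_syn_embed_hash_of_mem {q : Config L R D} (hq : q.1 ∈ acc) (d : D) :
    (M.syn ini acc).post q.embed (.hash, d) = {(.reset, fun _ => d)} :=
  post_eq_singleton_of_freeTrans (fun t => by grind [mem_trans_syn, freeTrans, Trans.embed]) q.2 d

theorem post_syn_embed_hash_of_notMem {q : Config L R D} (hq : q.1 ∉ acc) (d : D) :
    (M.syn ini acc).post q.embed (.hash, d) = {(.synch, fun _ => d)} :=
  post_eq_singleton_of_freeTrans (fun t => by grind [mem_trans_syn, freeTrans, Trans.embed]) q.2 d

theorem post_syn_embed_letter (q : Config L R D) (a : A) (d : D) :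
    (M.syn ini acc).post q.embed (.letter a, d) = Config.embed '' M.post q (a, d) := by
  have htrans (t : Trans (SynLoc L) R (SynLetter A)) :
      t ∈ (M.syn ini acc).trans ∧ t.src = .loc q.1 ∧ t.letter = .letter a ↔
        ∃ s ∈ M.trans, s.src = q.1 ∧ s.letter = a ∧ s.embed = t := by
    grind [mem_trans_syn, freeTrans, Trans.embed]
  ext q'
  simp only [post, Enabled, Set.mem_ofPred_eq]
  constructor
  · rintro ⟨t, ⟨ht, hsrc, hlet, hsat⟩, rfl⟩
    obtain ⟨s, hs, hsrc', hlet', rfl⟩ := (htrans t).1 ⟨ht, hsrc, hlet⟩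
    exact ⟨_, ⟨s, ⟨hs, hsrc', hlet', hsat⟩, rfl⟩, rfl⟩
  · rintro ⟨_, ⟨s, ⟨hs, hsrc, hlet, hsat⟩, rfl⟩, rfl⟩
    obtain ⟨ht, hsrc, hlet⟩ := (htrans s.embed).2 ⟨s, hs, hsrc, hlet, rfl⟩
    exact ⟨s.embed, ⟨ht, hsrc, hlet, hsat⟩, rfl⟩

theorem run_syn_embed {q : Config L R D} {w : DataWord A D} {q' : Config (SynLoc L) R D} :
    (M.syn ini acc).Run q.embed w.embed q' ↔ ∃ q₁, M.Run q w q₁ ∧ q₁.embed = q' := by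
  induction w generalizing q with
  | nil => simp [DataWord.embed, run_nil]
  | cons i w ih =>
    have hcons : DataWord.embed (i :: w) = (.letter i.1, i.2) :: DataWord.embed w := rfl
    simp only [hcons, run_cons, post_syn_embed_letter, Set.exists_mem_image, ih]
    grind

theorem run_syn_synch_concat {ν : R → D} {w : DataWord (SynLetter A) D} {a : SynLetter A} {d : D}
    {q : Config (SynLoc L) R D} :
    (M.syn ini acc).Run (.synch, ν) (w ++ [(a, d)]) q ↔ q = (.synch, fun _ => d) := by
  induction w generalizing ν with
  | nil => simp [run_cons, run_nil, post_syn_synch, eq_comm]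
  | cons i w ih => simp [run_cons, post_syn_synch, ih]

theorem IsSynchronizing.fst_eq_synch_of_run {w : DataWord (SynLetter A) D}
    (hw : (M.syn ini acc).IsSynchronizing w) {q q' : Config (SynLoc L) R D}
    (hrun : (M.syn ini acc).Run q w q') : q'.1 = .synch := by
  obtain ⟨hne, q₀, hq₀⟩ := hw
  have eq_of_run {p p'} (h : (M.syn ini acc).Run p w p') : p' = q₀ := by
    rw [← Set.mem_singleton_iff, ← hq₀, mem_postWord]
    exact ⟨p, trivial, h⟩
  obtain ⟨u, ⟨a, d⟩, rfl⟩ := (List.eq_nil_or_concat' w).resolve_left hne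
  have hsynch : (.synch, fun _ => d) = q₀ := eq_of_run (run_syn_synch_concat (ν := q.2).2 rfl)
  rw [eq_of_run hrun, ← hsynch]

theorem eq_synch_of_run_syn_embed_hash {q : Config L R D} {w : DataWord A D}
    (hw : w ∉ M.acceptedFrom q acc) {d : D} {q' : Config (SynLoc L) R D}
    (hrun : (M.syn ini acc).Run q.embed (w.embed ++ [(.hash, d)]) q') :
    q' = (.synch, fun _ => d) := by
  obtain ⟨_, hrun, hpost⟩ := run_concat.1 hrun
  obtain ⟨q₁, hq₁, rfl⟩ := run_syn_embed.1 hrun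
  have hacc : q₁.1 ∉ acc := fun hacc => hw ⟨q₁, hacc, hq₁⟩
  rwa [post_syn_embed_hash_of_notMem hacc] at hpost

theorem isSynchronizing_star_embed_hash {w : DataWord A D} {d : D}
    (hw : w ∉ M.acceptedFrom (ini, fun _ => d) acc) :
    (M.syn ini acc).IsSynchronizing ((.star, d) :: w.embed ++ [(.hash, d)]) := by
  refine ⟨by simp, (.synch, fun _ => d), ?_⟩
  ext q
  rw [mem_postWord, Set.mem_singleton_iff]
  constructor
  · rintro ⟨⟨ℓ, ν⟩, -, hrun⟩
    have hfrom_ini (hpost : (M.syn ini acc).post (ℓ, ν) (.star, d) = {(.loc ini, fun _ => d)}) :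
        q = (.synch, fun _ => d) := by
      obtain ⟨_, hq₁, hrun⟩ := run_cons.1 hrun
      rw [hpost] at hq₁
      obtain rfl := hq₁
      exact eq_synch_of_run_syn_embed_hash (q := (ini, fun _ => d)) hw hrun
    cases ℓ with
    | loc ℓ => exact hfrom_ini (post_syn_embed_star (ℓ, ν) d)
    | reset => exact hfrom_ini (post_syn_reset_star ν d)
    | synch => exact run_syn_synch_concat.1 hrun
  · rintro rfl
    exact ⟨(.synch, fun _ => d), trivial, run_syn_synch_concat.2 rfl⟩

/-- In the second alternative, `u` is the part of `w` after the last `★`, which carried `d`. -/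
theorem exists_run_syn_reset_or_forall_run_embed
    (huniv : ∀ (d : D) (u : DataWord A D), u ∈ M.acceptedFrom (ini, fun _ => d) acc) (ν : R → D)
    (w : DataWord (SynLetter A) D) :
    (∃ ν', (M.syn ini acc).Run (.reset, ν) w (.reset, ν')) ∨
      ∃ (d : D) (u : DataWord A D), ∀ q, M.Run (ini, fun _ => d) u q →
        (M.syn ini acc).Run (.reset, ν) w q.embed := by
  induction w using List.reverseRecOn with
  | nil => exact .inl ⟨ν, .nil _⟩
  | append_singleton w i ih =>
    obtain ⟨a, d⟩ := i
    simp only [run_concat]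
    rcases ih with ⟨ν', hrun⟩ | ⟨d₀, u, htrack⟩
    · by_cases ha : a = .star
      · subst ha
        refine .inr ⟨d, [], fun q hq => ⟨_, hrun, ?_⟩⟩
        rw [post_syn_reset_star, ← run_nil.1 hq]
        rfl
      · exact .inl ⟨fun _ => d, _, hrun, by rw [post_syn_reset_of_ne_star ha]; rfl⟩
    · obtain ⟨q₁, hacc, hq₁⟩ := huniv d₀ u
      cases a with
      | letter a =>
        refine .inr ⟨d₀, u ++ [(a, d)], fun q hq => ?_⟩
        obtain ⟨q₂, hq₂, hpost⟩ := run_concat.1 hq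
        exact ⟨_, htrack q₂ hq₂, by rw [post_syn_embed_letter]; exact ⟨q, hpost, rfl⟩⟩
      | hash =>
        exact .inl ⟨fun _ => d, _, htrack q₁ hq₁, by rw [post_syn_embed_hash_of_mem hacc]; rfl⟩
      | star =>
        refine .inr ⟨d, [], fun q hq => ⟨_, htrack q₁ hq₁, ?_⟩⟩
        rw [post_syn_embed_star, ← run_nil.1 hq]
        rfl

theorem exists_run_syn_reset_fst_ne_synch
    (huniv : ∀ (d : D) (u : DataWord A D), u ∈ M.acceptedFrom (ini, fun _ => d) acc) (ν : R → D)
    (w : DataWord (SynLetter A) D) :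
    ∃ q, (M.syn ini acc).Run (.reset, ν) w q ∧ q.1 ≠ .synch := by
  rcases exists_run_syn_reset_or_forall_run_embed huniv ν w with ⟨ν', hrun⟩ | ⟨d, u, htrack⟩
  · exact ⟨_, hrun, by simp⟩
  · obtain ⟨q, -, hq⟩ := huniv d u
    exact ⟨_, htrack q hq, by simp [Config.embed]⟩

end RA

end RegAut

theorem stmt12_general {L R A D : Type*} [Nonempty D] (M : RegAut.RA L R A) (ini : L) (acc : Set L)
    (hini : ∀ ν ν' : R → D, M.acceptedFrom (ini, ν) acc = M.acceptedFrom (ini, ν') acc) :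
    (∃ w : RegAut.DataWord A D, w ∉ M.language D ini acc) ↔
      (∃ w : RegAut.DataWord (RegAut.SynLetter A) D, (M.syn ini acc).IsSynchronizing w) := by
  obtain ⟨d⟩ := ‹Nonempty D›
  constructor
  · rintro ⟨w, hw⟩
    have hrej : w ∉ M.acceptedFrom (ini, fun _ => d) acc :=
      fun h => hw (RegAut.RA.mem_language.2 ⟨_, h⟩)
    exact ⟨_, RegAut.RA.isSynchronizing_star_embed_hash hrej⟩
  · rintro ⟨w, hw⟩
    by_contra! hlang
    have huniv (e : D) (u : RegAut.DataWord A D) : u ∈ M.acceptedFrom (ini, fun _ => e) acc := by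
      obtain ⟨ν, hu⟩ := RegAut.RA.mem_language.1 (hlang u)
      rwa [hini _ ν]
    obtain ⟨q, hrun, hq⟩ := RegAut.RA.exists_run_syn_reset_fst_ne_synch huniv (fun _ => d) w
    exact hq (hw.fst_eq_synch_of_run hrun)

theorem stmt12 {L R A D : Type*} [Finite L] [Finite R] [Finite A] [Infinite D]
    (M : RegAut.RA L R A) (ini : L) (acc : Set L)
    (hcomplete : M.Complete D)
    (hupdate : M.UpdatesAllFrom ini)
    (hguard : M.ValuationIndependentFrom D ini) :
    (∃ w : RegAut.DataWord A D, w ∉ M.language D ini acc) ↔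
      (∃ w : RegAut.DataWord (RegAut.SynLetter A) D, (M.syn ini acc).IsSynchronizing w) :=
  stmt12_general M ini acc (hguard.acceptedFrom_eq hupdate acc)
end
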